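/- arXiv:1312.7800 — 3 statements merged into one kernel-verified Lean document; each statement's English description precedes it below -/
import Mathlib

section
/- The dimension of any LDB division algebra over a field K is a power of 2. -/
theorem ldb_aux {K A : Type*} [Field K] [AddCommGroup A] [Module K A]
    [FiniteDimensional K A] (l : List (A →ₗ[K] A))
    (hsq : ∀ T ∈ l, ∃ a b : K, ∀ x, T (T x) = a • x + b • T x)
    (hac : ∀ T ∈ l, ∀ U ∈ l, ∃ a b c : K, ∀ x, T (U x) + U (T x) = a • x + b • T x + c • U x) :
    ∀ W : Submodule K A, W ≠ ⊥ → (∀ T ∈ l, ∀ x ∈ W, T x ∈ W) →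
      (∀ W' : Submodule K A, W' ≠ ⊥ → W' ≤ W → (∀ T ∈ l, ∀ x ∈ W', T x ∈ W') → W' = W) →
      ∃ k : ℕ, Module.finrank K W = 2 ^ k := by
  induction l with
  | nil =>
    intro W hW _ hmin
    obtain ⟨w, hwW, hw⟩ := W.ne_bot_iff.1 hW
    have h := hmin (K ∙ w) (by simpa using hw) (by simpa using hwW) (by simp)
    refine ⟨0, ?_⟩
    rw [← h, finrank_span_singleton hw]
    rfl
  | cons v l ih =>
    intro W hW hst hmin
    have ih' := ih (fun T hT => hsq T (List.mem_cons_of_mem _ hT))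
      (fun T hT U hU => hac T (List.mem_cons_of_mem _ hT) U (List.mem_cons_of_mem _ hU))
    obtain ⟨S, ⟨hS0, hSW, hSst⟩, hSmin⟩ := IsArtinian.set_has_minimal
      {S : Submodule K A | S ≠ ⊥ ∧ S ≤ W ∧ ∀ T ∈ l, ∀ x ∈ S, T x ∈ S}
      ⟨W, hW, le_rfl, fun T hT => hst T (List.mem_cons_of_mem _ hT)⟩
    have hSmin' : ∀ W' : Submodule K A, W' ≠ ⊥ → W' ≤ S → (∀ T ∈ l, ∀ x ∈ W', T x ∈ W') → W' = S := by
      intro W' h0 hle h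
      by_contra hne
      exact hSmin W' ⟨h0, hle.trans hSW, h⟩ (lt_of_le_of_ne hle hne)
    obtain ⟨k, hk⟩ := ih' S hS0 hSst hSmin'
    have hv : v ∈ v :: l := List.mem_cons_self
    have hsum : S ⊔ S.map v = W := by
      apply hmin
      · intro h
        exact hS0 (eq_bot_iff.2 (h ▸ le_sup_left))
      · refine sup_le hSW ?_
        rintro _ ⟨s, hs, rfl⟩
        exact hst v hv s (hSW hs)
      · intro T hT x hx
        obtain ⟨s, hs, _, ⟨t, ht, rfl⟩, rfl⟩ := Submodule.mem_sup.1 hx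
        have iS : ∀ {z}, z ∈ S → z ∈ S ⊔ S.map v := fun h => Submodule.mem_sup_left h
        have iv : ∀ {z}, z ∈ S → v z ∈ S ⊔ S.map v :=
          fun h => Submodule.mem_sup_right (Submodule.mem_map_of_mem h)
        rw [map_add]
        rcases List.mem_cons.1 hT with rfl | hT'
        · obtain ⟨a, b, hab⟩ := hsq T hT
          rw [hab]
          exact add_mem (iv hs) (add_mem (Submodule.smul_mem _ _ (iS ht))
            (Submodule.smul_mem _ _ (iv ht)))
        · obtain ⟨a, b, c, h⟩ := hac T hT v hv
          rw [eq_sub_of_add_eq (h t)]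
          refine add_mem (iS (hSst T hT' s hs)) (sub_mem (add_mem (add_mem ?_ ?_) ?_) ?_)
          · exact Submodule.smul_mem _ _ (iS ht)
          · exact Submodule.smul_mem _ _ (iS (hSst T hT' t ht))
          · exact Submodule.smul_mem _ _ (iv ht)
          · exact iv (hSst T hT' t ht)
    by_cases hN : S ⊓ S.comap v = ⊥
    · refine ⟨k + 1, ?_⟩
      have hinj : Disjoint S (LinearMap.ker v) := by
        rw [Submodule.disjoint_def]
        intro x hx hx'
        have : x ∈ S ⊓ S.comap v := ⟨hx, by
          rw [LinearMap.mem_ker] at hx'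
          simp [hx']⟩
        rw [hN] at this
        simpa using this
      have hf : Module.finrank K (S.map v) = Module.finrank K S := by
        have : Function.Injective (v.domRestrict S) := by
          rw [← LinearMap.ker_eq_bot, LinearMap.ker_eq_bot']
          rintro ⟨x, hx⟩ h
          ext
          exact (Submodule.disjoint_def.1 hinj) x hx h
        have h2 := LinearMap.finrank_range_of_inj this
        rwa [LinearMap.range_domRestrict] at h2
      have hd : S ⊓ S.map v = ⊥ := by
        rw [eq_bot_iff]
        rintro _ ⟨h1, ⟨s, hs, rfl⟩⟩
        have : s ∈ S ⊓ S.comap v := ⟨hs, h1⟩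
        rw [hN] at this
        have : s = 0 := by simpa using this
        simp [this]
      have := Submodule.finrank_sup_add_finrank_inf_eq S (S.map v)
      rw [hsum, hd, hf, hk, finrank_bot] at this
      rw [pow_succ]; omega
    · have h := hSmin' _ hN inf_le_left (by
        rintro T hT x ⟨hx, hx'⟩
        refine ⟨hSst T hT x hx, ?_⟩
        obtain ⟨a, b, c, h⟩ := hac T (List.mem_cons_of_mem _ hT) v hv
        have hx'' : v x ∈ S := hx'
        change v (T x) ∈ S
        rw [eq_sub_of_add_eq' (h x)]
        refine sub_mem (add_mem (add_mem ?_ ?_) ?_) ?_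
        · exact Submodule.smul_mem _ _ hx
        · exact Submodule.smul_mem _ _ (hSst T hT x hx)
        · exact Submodule.smul_mem _ _ hx''
        · exact hSst T hT _ hx'')
      have h2 : S.map v ≤ S := by
        rw [Submodule.map_le_iff_le_comap]
        exact inf_eq_left.1 h
      rw [sup_eq_left.2 h2] at hsum
      exact ⟨k, hsum ▸ hk⟩

theorem stmt_8 (K A : Type*) [Field K] [AddCommGroup A] [Module K A]
    [FiniteDimensional K A] [Nontrivial A]
    (star bull : A →ₗ[K] A →ₗ[K] A)
    (hstar : ∀ x y : A, x ≠ 0 → y ≠ 0 → star x y ≠ 0)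
    (hbull : ∀ x y : A, x ≠ 0 → y ≠ 0 → bull x y ≠ 0)
    (q : QuadraticForm K A)
    (hq : ∀ x y : A, star x (bull x y) = q x • y) :
    ∃ k : ℕ, Module.finrank K A = 2 ^ k := by
  obtain ⟨e, he⟩ := exists_ne (0 : A)
  have hq' : ∀ x y : A, bull x (star x y) = q x • y := by
    intro x y
    by_cases hx : x = 0
    · simp [hx]
    have hinj : Function.Injective (bull x) := by
      rw [← LinearMap.ker_eq_bot, LinearMap.ker_eq_bot']
      intro z hz
      by_contra h
      exact hbull x z hx h hz
    obtain ⟨z, rfl⟩ := LinearMap.surjective_of_injective hinj y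
    rw [hq, map_smul]
  let P : A → A → K := fun x y => q (x + y) - q x - q y
  have p1 : ∀ x y z, star x (bull y z) + star y (bull x z) = P x y • z := by
    intro x y z
    have h := hq (x + y) z
    simp only [map_add, LinearMap.add_apply, hq] at h
    simp only [P, sub_smul, ← h]
    abel
  have p2 : ∀ x y z, bull x (star y z) + bull y (star x z) = P x y • z := by
    intro x y z
    have h := hq' (x + y) z
    simp only [map_add, LinearMap.add_apply, hq'] at h
    simp only [P, sub_smul, ← h]
    abel
  let T : A → (A →ₗ[K] A) := fun x => bull x ∘ₗ star e
  have hT : ∀ x z, T x z = bull x (star e z) := fun _ _ => rfl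
  let B := Module.finBasis K A
  have key : ∀ x y z, T x (T y z) = P x e • T y z - bull e (star x (T y z)) := by
    intro x y z
    rw [← p2 x e (T y z), hT x]
    abel
  have main := ldb_aux (List.ofFn fun i => T (B i)) (by
      intro U hU
      obtain ⟨i, rfl⟩ := (List.mem_ofFn' _ _).1 hU
      refine ⟨-(q (B i) * q e), P (B i) e, fun z => ?_⟩
      simp only []
      rw [key, hT, hq, map_smul, hq', smul_smul, neg_smul]
      abel) (by
      intro U hU V hV
      obtain ⟨i, rfl⟩ := (List.mem_ofFn' _ _).1 hU
      obtain ⟨j, rfl⟩ := (List.mem_ofFn' _ _).1 hV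
      refine ⟨-(P (B i) (B j) * q e), P (B j) e, P (B i) e, fun z => ?_⟩
      simp only []
      have h := congrArg (bull e) (p1 (B i) (B j) (star e z))
      rw [map_smul, hq', smul_smul, map_add] at h
      rw [key, key, neg_smul, ← h, hT, hT]
      abel) ⊤ top_ne_bot (by simp) (by
      intro W hW _ hst
      obtain ⟨w, hwW, hw⟩ := W.ne_bot_iff.1 hW
      have hW' : ∀ x, T x w ∈ W := by
        intro x
        rw [← B.sum_repr x, hT, map_sum, LinearMap.sum_apply]
        refine sum_mem fun i _ => ?_
        rw [map_smul, LinearMap.smul_apply]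
        exact W.smul_mem _ (hst (T (B i)) ((List.mem_ofFn' _ _).2 ⟨i, rfl⟩) w hwW)
      have hinj : Function.Injective (bull.flip (star e w)) := by
        rw [← LinearMap.ker_eq_bot, LinearMap.ker_eq_bot']
        intro z hz
        by_contra h
        exact hbull z _ h (hstar e w he hw) hz
      rw [eq_top_iff]
      intro y _
      obtain ⟨x, rfl⟩ := LinearMap.surjective_of_injective hinj y
      exact hW' x)
  rwa [finrank_top] at main
end

section
/- Every non-degenerate LDB division algebra (one whose attached quadratic form is non-degenerate) has dimension 1, 2, 4, or 8. -/
open Module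

lemma core_aux (F : Type*) [Field F] [IsAlgClosed F] (n : ℕ) :
    ∀ (U W : Type _) [AddCommGroup U] [Module F U] [FiniteDimensional F U]
      [AddCommGroup W] [Module F W] [FiniteDimensional F W]
      (β : U →ₗ[F] U →ₗ[F] F) (C : U →ₗ[F] (W →ₗ[F] W)),
      (∀ x w, C x (C x w) = β x x • w) →
      (∀ x, (∀ y, β x y + β y x = 0) → x = 0) → finrank F U = n →
      2 ^ (n / 2) ∣ finrank F W ∧ (n % 2 = 1 → (2 : F) ≠ 0) := by
  induction n using Nat.strong_induction_on with
  | _ n ih =>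
  intro U W _ _ _ _ _ _ β C hC hnd hn
  rcases Nat.lt_or_ge n 2 with h2 | h2
  · refine ⟨by rw [Nat.div_eq_of_lt h2]; simp, fun h1 h20 => ?_⟩
    have hn1 : finrank F U = 1 := by omega
    obtain ⟨v, hv0, hv⟩ := finrank_eq_one_iff'.1 hn1
    apply hv0
    apply hnd
    intro y
    obtain ⟨c, rfl⟩ := hv y
    simp only [map_smul, LinearMap.smul_apply, smul_eq_mul]
    linear_combination (c * β v v) * h20
  -- isotropic vector
  obtain ⟨e, he0, hee⟩ : ∃ e : U, e ≠ 0 ∧ β e e = 0 := by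
    obtain ⟨x, y, hxy⟩ : ∃ x y : U, LinearIndependent F ![x, y] := by
      have : Nontrivial U := Module.nontrivial_of_finrank_pos (R := F) (by omega)
      obtain ⟨x, hx⟩ := exists_ne (0 : U)
      obtain ⟨y, hy⟩ := exists_linearIndependent_pair_of_one_lt_finrank (R := F) (by omega) hx
      exact ⟨x, y, hy⟩
    by_cases hy : β y y = 0
    · exact ⟨y, hxy.ne_zero 1, hy⟩
    · obtain ⟨t, ht⟩ := IsAlgClosed.exists_root
        (Polynomial.C (β y y) * Polynomial.X ^ 2 + Polynomial.C (β x y + β y x) * Polynomial.X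
          + Polynomial.C (β x x)) (by rw [Polynomial.degree_quadratic hy]; norm_num)
      refine ⟨x + t • y, ?_, ?_⟩
      · intro h
        rw [LinearIndependent.pair_iff] at hxy
        have := hxy 1 t (by simpa using h)
        simp at this
      · simp [Polynomial.IsRoot] at ht
        simp only [map_add, map_smul, LinearMap.smul_apply, LinearMap.add_apply, smul_eq_mul]
        linear_combination ht
  obtain ⟨f, hff, hef⟩ : ∃ f : U, β f f = 0 ∧ β e f + β f e = 1 := by
    have : ∃ y, β e y + β y e ≠ 0 := by
      by_contra! h
      exact he0 (hnd e h)
    obtain ⟨y, hy⟩ := this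
    set c := β e y + β y e with hc
    obtain ⟨g, hg⟩ : ∃ g : U, β e g + β g e = 1 := by
      refine ⟨c⁻¹ • y, ?_⟩
      simp only [map_smul, LinearMap.smul_apply, smul_eq_mul]
      rw [← mul_add, ← hc, inv_mul_cancel₀ hy]
    refine ⟨g - (β g g) • e, ?_, ?_⟩
    · simp only [map_sub, map_smul, LinearMap.smul_apply, LinearMap.sub_apply, smul_eq_mul]
      linear_combination (β g g)^2 * hee - β g g * hg
    · simp only [map_sub, map_smul, LinearMap.smul_apply, LinearMap.sub_apply, smul_eq_mul]
      linear_combination hg - 2 * β g g * hee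
  -- polarization
  have hP : ∀ x y w, C x (C y w) + C y (C x w) = (β x y + β y x) • w := by
    intro x y w
    have h := hC (x + y) w
    simp only [map_add, LinearMap.add_apply, add_smul, hC] at h
    rw [add_smul]
    rw [← sub_eq_zero] at h ⊢
    rw [← h]
    abel
  let b : U →ₗ[F] U →ₗ[F] F := β + β.flip
  have hb : ∀ x y, b x y = β x y + β y x := fun x y => rfl
  let g : U →ₗ[F] F × F := (b e).prod (b f)
  have hg : ∀ x, g x = (b e x, b f x) := fun x => rfl
  have hgs : Function.Surjective g := by
    rintro ⟨s, t⟩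
    refine ⟨s • f + t • e, ?_⟩
    rw [hg, Prod.mk.injEq]
    simp only [map_smul, map_add, smul_eq_mul, hb, LinearMap.add_apply, LinearMap.smul_apply]
    constructor
    · linear_combination s * hef + 2 * t * hee
    · linear_combination t * hef + 2 * s * hff
  have hdim : finrank F (LinearMap.ker g) + 2 = n := by
    have := LinearMap.finrank_range_add_finrank_ker g
    rw [LinearMap.range_eq_top.2 hgs, finrank_top, Module.finrank_prod, finrank_self] at this
    omega
  have hU : ∀ x : LinearMap.ker g, b e x = 0 ∧ b f x = 0 := by
    rintro ⟨x, hx⟩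
    rw [LinearMap.mem_ker, hg] at hx
    simpa using hx
  have hinv : ∀ x : LinearMap.ker g, ∀ w ∈ LinearMap.ker (C e), C x w ∈ LinearMap.ker (C e) := by
    intro x w hw
    rw [LinearMap.mem_ker] at hw ⊢
    have h := hP e x w
    have h2 := (hU x).1
    rw [hb] at h2
    rw [h2, hw] at h
    simpa using h
  have hW : finrank F W = 2 * finrank F (LinearMap.ker (C e)) := by
    have h := LinearMap.finrank_range_add_finrank_ker (C e)
    have h2 : LinearMap.range (C e) = LinearMap.ker (C e) := by
      apply le_antisymm
      · rintro _ ⟨w, rfl⟩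
        rw [LinearMap.mem_ker, hC, hee, zero_smul]
      · intro w hw
        rw [LinearMap.mem_ker] at hw
        refine ⟨C f w, ?_⟩
        have h := hP e f w
        rw [hef, hw] at h
        simpa using h
    rw [h2] at h
    omega
  let C' : LinearMap.ker g →ₗ[F] (LinearMap.ker (C e) →ₗ[F] LinearMap.ker (C e)) :=
    { toFun := fun x => (C x).restrict (hinv x)
      map_add' := by intro x y; ext w; simp
      map_smul' := by intro c x; ext w; simp }
  have key := ih (finrank F (LinearMap.ker g)) (by omega) (LinearMap.ker g) (LinearMap.ker (C e))
    (β.domRestrict₁₂ (LinearMap.ker g) (LinearMap.ker g)) C'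
    (by
      intro x w
      ext
      simp [C', hC, LinearMap.domRestrict₁₂_apply])
    (by
      intro x hx
      ext
      apply hnd
      intro y
      have h1 := (hU x).1
      have h2 := (hU x).2
      rw [hb] at h1 h2
      have hy : y - (b f y) • e - (b e y) • f ∈ LinearMap.ker g := by
        rw [LinearMap.mem_ker, hg]
        simp only [map_sub, map_smul, smul_eq_mul, hb, Prod.mk_eq_zero, LinearMap.sub_apply, LinearMap.smul_apply]
        constructor
        · linear_combination (-(β e y + β y e)) * hef - 2 * (β f y + β y f) * hee
        · linear_combination (-(β f y + β y f)) * hef - 2 * (β e y + β y e) * hff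
      have := hx ⟨_, hy⟩
      simp only [LinearMap.domRestrict₁₂_apply, map_sub, map_smul, smul_eq_mul,
        LinearMap.sub_apply, LinearMap.smul_apply] at this
      linear_combination this + b f y * h1 + b e y * h2)
    rfl
  obtain ⟨k1, k2⟩ := key
  constructor
  · have : n / 2 = finrank F (LinearMap.ker g) / 2 + 1 := by omega
    rw [this, pow_succ, hW, mul_comm]
    exact Nat.mul_dvd_mul_left 2 k1
  · intro h; exact k2 (by omega)

lemma base_aux (K U W : Type*) [Field K] [AddCommGroup U] [Module K U] [FiniteDimensional K U]
    [AddCommGroup W] [Module K W] [FiniteDimensional K W] (q : QuadraticForm K U)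
    (C : U →ₗ[K] (W →ₗ[K] W)) (hC : ∀ x w, C x (C x w) = q x • w)
    (hnd : ∀ x : U, (∀ y : U, QuadraticMap.polar ⇑q x y = 0) → x = 0) :
    2 ^ (finrank K U / 2) ∣ finrank K W ∧ (finrank K U % 2 = 1 → (2 : K) ≠ 0) := by
  classical
  obtain ⟨β, rfl⟩ := LinearMap.BilinMap.toQuadraticMap_surjective q
  simp only [LinearMap.BilinMap.toQuadraticMap_apply, LinearMap.BilinMap.polar_toQuadraticMap] at hC hnd
  have hP : ∀ x y, C x * C y + C y * C x = (β x y + β y x) • (1 : Module.End K W) := by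
    intro x y
    ext w
    have h := hC (x + y) w
    simp only [map_add, LinearMap.add_apply, add_smul, hC] at h
    simp only [LinearMap.add_apply, Module.End.mul_apply, LinearMap.smul_apply,
      Module.End.one_apply, add_smul]
    rw [← sub_eq_zero] at h ⊢
    rw [← h]
    abel
  have hS : ∀ x, C x * C x = β x x • (1 : Module.End K W) := by
    intro x; ext w; simp [hC]
  let u := finBasis K U
  let v := finBasis K W
  let F := AlgebraicClosure K
  let φ : K →+* F := algebraMap K F
  let M := LinearMap.toMatrixAlgEquiv v
  let c : Fin (finrank K U) → Matrix (Fin (finrank K W)) (Fin (finrank K W)) F :=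
    fun i => φ.mapMatrix (M (C (u i)))
  have hone : ∀ t : K, φ.mapMatrix (t • (1 : Matrix (Fin (finrank K W)) (Fin (finrank K W)) K))
      = φ t • 1 := by
    intro t
    ext a b
    by_cases hab : a = b <;> simp [Matrix.one_apply, hab]
  have hcP : ∀ i j, c i * c j + c j * c i = φ (β (u i) (u j) + β (u j) (u i)) • 1 := by
    intro i j
    have h := congrArg (fun m => φ.mapMatrix (M m)) (hP (u i) (u j))
    simp only [map_add (M : _ ≃ₐ[K] _), map_mul (M : _ ≃ₐ[K] _), map_smul (M : _ ≃ₐ[K] _),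
      map_one (M : _ ≃ₐ[K] _), map_add φ.mapMatrix, map_mul φ.mapMatrix] at h
    refine h.trans ?_
    rw [hone]
  have hcS : ∀ i, c i * c i = φ (β (u i) (u i)) • 1 := by
    intro i
    have h := congrArg (fun m => φ.mapMatrix (M m)) (hS (u i))
    simp only [map_mul (M : _ ≃ₐ[K] _), map_smul (M : _ ≃ₐ[K] _),
      map_one (M : _ ≃ₐ[K] _), map_mul φ.mapMatrix] at h
    refine h.trans ?_
    rw [hone]
  let G : Matrix (Fin (finrank K U)) (Fin (finrank K U)) K := Matrix.of fun i j => β (u i) (u j)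
  have hdet : (G + G.transpose).det ≠ 0 := by
    intro h0
    obtain ⟨x, hx0, hx⟩ := Matrix.exists_vecMul_eq_zero_iff.2 h0
    apply hx0
    have hz : ∑ i, x i • u i = 0 := by
      apply hnd
      have : β (∑ i, x i • u i) + β.flip (∑ i, x i • u i) = 0 := by
        apply u.ext
        intro j
        have := congrFun hx j
        simp [Matrix.vecMul, dotProduct, G, mul_add, Finset.sum_add_distrib] at this
        simpa [Finset.sum_apply] using this
      intro y
      exact LinearMap.congr_fun this y
    funext i
    exact Fintype.linearIndependent_iff.1 u.linearIndependent x hz i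
  have hdetF : ((G + G.transpose).map φ).det ≠ 0 := by
    have : ((G + G.transpose).map φ).det = φ (G + G.transpose).det := by
      rw [RingHom.map_det]; rfl
    rw [this]
    exact (map_ne_zero φ).2 hdet
  let CF : (Fin (finrank K U) → F) →ₗ[F]
      ((Fin (finrank K W) → F) →ₗ[F] (Fin (finrank K W) → F)) :=
    (Matrix.toLin' : Matrix _ _ F ≃ₗ[F] _).toLinearMap ∘ₗ Fintype.linearCombination F c
  have hCF : ∀ x w, CF x w = (∑ i, x i • c i).mulVec w := by
    intro x w
    simp only [CF, Fintype.linearCombination_apply, LinearMap.comp_apply, LinearEquiv.coe_coe,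
      Matrix.toLin'_apply]
  let βF : (Fin (finrank K U) → F) →ₗ[F] (Fin (finrank K U) → F) →ₗ[F] F :=
    Matrix.toLinearMap₂' F (G.map φ)
  have hβF : ∀ x y, βF x y = ∑ i, ∑ j, x i * y j * φ (β (u i) (u j)) := by
    intro x y
    simp [βF, Matrix.toLinearMap₂'_apply, G, mul_assoc]
  have key := core_aux F (finrank K U) (Fin (finrank K U) → F) (Fin (finrank K W) → F) βF CF
    (by
      intro x w
      rw [hCF, hCF, Matrix.mulVec_mulVec]
      have : (∑ i, x i • c i) * (∑ i, x i • c i) = βF x x • 1 := by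
        rw [← sub_eq_zero, hβF, Finset.sum_mul_sum, Finset.sum_smul, ← Finset.sum_sub_distrib]
        simp_rw [Finset.sum_smul]
        rw [Finset.sum_congr rfl (fun i _ => (Finset.sum_sub_distrib _ _).symm)]
        rw [← Finset.sum_product']
        refine Finset.sum_involution (fun p _ => p.swap) ?_ ?_ ?_ ?_
        · rintro ⟨i, j⟩ -
          have h := hcP i j
          simp only [smul_mul_smul_comm, Prod.swap, map_add, add_smul] at h ⊢
          have h2 := congrArg (fun m => (x i * x j) • m) h
          simp only [smul_add, smul_smul] at h2
          rw [mul_comm (x j) (x i)]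
          rw [← sub_eq_zero] at h2
          rw [← h2]
          abel
        · rintro ⟨i, j⟩ - hne heq
          apply hne
          simp only [Prod.swap, Prod.mk.injEq] at heq
          obtain ⟨rfl, -⟩ := heq
          simp [hcS, smul_smul, mul_assoc]
        · simp
        · simp
      rw [this, Matrix.smul_mulVec, Matrix.one_mulVec])
    (by
      intro x hx
      apply Matrix.eq_zero_of_vecMul_eq_zero hdetF
      funext j
      have := hx (Pi.single j 1)
      rw [hβF, hβF] at this
      simp [Pi.single_apply] at this
      simp [Matrix.vecMul, dotProduct, G, mul_add, Finset.sum_add_distrib]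
      exact this)
    (by simp)
  refine ⟨by simpa using key.1, fun h h2 => key.2 h ?_⟩
  have := congrArg φ h2
  rw [map_ofNat, map_zero] at this
  exact this

lemma odd_aux (K A : Type*) [Field K] [AddCommGroup A] [Module K A]
    [FiniteDimensional K A] (S T : A →ₗ[K] A) (h : S * T = - (T * S))
    (hS : LinearMap.det S ≠ 0) (hT : LinearMap.det T ≠ 0) (h2 : (2 : K) ≠ 0) :
    finrank K A % 2 ≠ 1 := by
  intro ho
  have h1 := congrArg LinearMap.det h
  have h3 : -(T * S) = (-1 : K) • (T * S) := by simp
  rw [h3, LinearMap.det_smul, map_mul, map_mul, Odd.neg_one_pow (Nat.odd_iff.2 ho)] at h1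
  have : 2 * (LinearMap.det S * LinearMap.det T) = 0 := by linear_combination h1
  exact mul_ne_zero h2 (mul_ne_zero hS hT) this

lemma arith_aux (m : ℕ) (hm : 0 < m + m) (hlt : m < 5) (h : 2 ^ m ∣ (m + m) + (m + m)) :
    m + m = 1 ∨ m + m = 2 ∨ m + m = 4 ∨ m + m = 8 := by
  interval_cases m <;> revert h hm <;> decide

theorem stmt_10 (K A : Type*) [Field K] [AddCommGroup A] [Module K A]
    [FiniteDimensional K A] [Nontrivial A]
    (star bull : A →ₗ[K] A →ₗ[K] A)
    (hstar : ∀ x y : A, x ≠ 0 → y ≠ 0 → star x y ≠ 0)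
    (hbull : ∀ x y : A, x ≠ 0 → y ≠ 0 → bull x y ≠ 0)
    (q : QuadraticForm K A)
    (hq : ∀ x y : A, star x (bull x y) = q x • y)
    (hnd : ∀ x : A, (∀ y : A, QuadraticMap.polar ⇑q x y = 0) → x = 0) :
    Module.finrank K A = 1 ∨ Module.finrank K A = 2 ∨
    Module.finrank K A = 4 ∨ Module.finrank K A = 8 := by
  have hpos : 0 < finrank K A := finrank_pos
  have hq0 : ∀ x, x ≠ 0 → q x ≠ 0 := by
    intro x hx h
    have h1 := hq x x
    rw [h, zero_smul] at h1
    exact hstar x _ hx (hbull x x hx hx) h1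
  have hq' : ∀ x y : A, bull x (star x y) = q x • y := by
    intro x y
    by_cases hx : x = 0
    · subst hx; simp
    have h1 := hq x (star x y)
    by_contra hne
    have h2 : star x (bull x (star x y) - q x • y) ≠ 0 := hstar x _ hx (sub_ne_zero.2 hne)
    apply h2
    rw [map_sub, h1, map_smul, sub_self]
  let C : A →ₗ[K] ((A × A) →ₗ[K] (A × A)) :=
    { toFun := fun x => ((star x) ∘ₗ LinearMap.snd K A A).prod ((bull x) ∘ₗ LinearMap.fst K A A)
      map_add' := by intro x y; ext <;> simp
      map_smul' := by intro c x; ext <;> simp }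
  have key := base_aux K A (A × A) q C (by rintro x ⟨a, b⟩; simp [C, hq, hq']) hnd
  rw [finrank_prod] at key
  obtain ⟨k1, k2⟩ := key
  have pol : ∀ x y a, star x (bull y a) + star y (bull x a) = QuadraticMap.polar q x y • a := by
    intro x y a
    have h := hq (x + y) a
    simp only [map_add, LinearMap.add_apply, hq] at h
    rw [QuadraticMap.polar, sub_smul, sub_smul, ← h]
    abel
  have pol' : ∀ x y a, bull x (star y a) + bull y (star x a) = QuadraticMap.polar q x y • a := by
    intro x y a
    have h := hq' (x + y) a
    simp only [map_add, LinearMap.add_apply, hq'] at h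
    rw [QuadraticMap.polar, sub_smul, sub_smul, ← h]
    abel
  generalize hn : finrank K A = n at *
  rcases Nat.even_or_odd n with he | ho
  · obtain ⟨m, rfl⟩ := he
    have hm : (m + m) / 2 = m := by omega
    rw [hm] at k1
    have hlt : m < 5 := by
      by_contra! hge
      have h1 := Nat.le_of_dvd (by omega) k1
      have h2 : ∀ k, 5 ≤ k → 4 * k < 2 ^ k := by
        intro k hk
        induction k, hk using Nat.le_induction with
        | base => norm_num
        | succ k hk ih => rw [pow_succ]; omega
      have := h2 m hge
      omega
    exact arith_aux m hpos hlt k1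
  · left
    have h2 := k2 (Nat.odd_iff.1 ho)
    by_contra hn1
    have hn3 : 3 ≤ n := by obtain ⟨m, rfl⟩ := ho; omega
    obtain ⟨x, hx⟩ := exists_ne (0 : A)
    let b : A → (A →ₗ[K] K) := fun x => q.polarBilin x
    have hb : ∀ x y, b x y = QuadraticMap.polar q x y := fun x y => rfl
    have ex : ∀ g : A →ₗ[K] K × K, ∃ y, y ≠ 0 ∧ g y = 0 := by
      intro g
      have h := LinearMap.finrank_range_add_finrank_ker g
      have h3 := Submodule.finrank_le (LinearMap.range g)
      rw [Module.finrank_prod, finrank_self] at h3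
      have : Nontrivial (LinearMap.ker g) := Module.nontrivial_of_finrank_pos (R := K) (by omega)
      obtain ⟨⟨y, hy⟩, hy0⟩ := exists_ne (0 : LinearMap.ker g)
      exact ⟨y, by simpa using hy0, hy⟩
    obtain ⟨y, hy, hxy⟩ := ex ((b x).prod 0)
    obtain ⟨z, hz, hz2⟩ := ex ((b x).prod (b y))
    simp [hb] at hxy hz2
    obtain ⟨hxz, hyz⟩ := hz2
    have hdet : ∀ s t, s ≠ 0 → t ≠ 0 → LinearMap.det (star s * bull t) ≠ 0 := by
      intro s t hs ht h0
      have := LinearMap.bot_lt_ker_of_det_eq_zero h0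
      obtain ⟨a, ha, ha0⟩ := Submodule.exists_mem_ne_zero_of_ne_bot this.ne'
      exact hstar s _ hs (hbull t a ht ha0) ha
    refine odd_aux K A (star x * bull y) (star x * bull z) ?_ (hdet _ _ hx hy) (hdet _ _ hx hz) h2
      (by rw [hn]; exact Nat.odd_iff.1 ho)
    ext a
    simp only [Module.End.mul_apply, LinearMap.neg_apply]
    have e1 : ∀ a, bull y (star x a) = - bull x (star y a) := by
      intro a
      have := pol' x y a
      rw [hxy, zero_smul] at this
      exact eq_neg_of_add_eq_zero_right this
    have e2 : ∀ a, bull z (star x a) = - bull x (star z a) := by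
      intro a
      have := pol' x z a
      rw [hxz, zero_smul] at this
      exact eq_neg_of_add_eq_zero_right this
    have e3 := pol y z a
    rw [hyz, zero_smul] at e3
    rw [e1, e2, map_neg, map_neg, hq, hq, eq_neg_of_add_eq_zero_left e3]
    simp
end

section
/- Let q be a non-degenerate quadratic form over a field K of characteristic not 2 that is the quadratic form attached to a 4-dimensional LDB division algebra whose attached form represents 1. Then q is a 2-fold Pfister form: q ≃ ⟨1, −a⟩ ⊗ ⟨1, −b⟩ for some a, b ∈ K*. -/
theorem stmt_17 (K A : Type*) [Field K] [AddCommGroup A] [Module K A]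
    [FiniteDimensional K A] [Nontrivial A]
    (hchar : (2 : K) ≠ 0)
    (star bull : A →ₗ[K] A →ₗ[K] A)
    (hstar : ∀ x y : A, x ≠ 0 → y ≠ 0 → star x y ≠ 0)
    (hbull : ∀ x y : A, x ≠ 0 → y ≠ 0 → bull x y ≠ 0)
    (q : QuadraticForm K A)
    (hq : ∀ x y : A, star x (bull x y) = q x • y)
    (hnd : ∀ x : A, (∀ y : A, QuadraticMap.polar ⇑q x y = 0) → x = 0)
    (hdim : Module.finrank K A = 4)
    (hrep : ∃ e : A, q e = 1) :
    ∃ a b : K, a ≠ 0 ∧ b ≠ 0 ∧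
      QuadraticMap.Equivalent q
        (QuadraticMap.weightedSumSquares K ![1, -a, -b, a * b]) := by
  obtain ⟨e, he⟩ := hrep
  have e0 : e ≠ 0 := by
    rintro rfl
    simp at he
  have anis : ∀ x, q x = 0 → x = 0 := by
    intro x hx
    by_contra h0
    have h1 := hq x e
    rw [hx, zero_smul] at h1
    exact hstar x _ h0 (hbull x e h0 e0) h1
  have hpol : ∀ x y z, star x (bull y z) + star y (bull x z) = QuadraticMap.polar q x y • z := by
    intro x y z
    have h1 := hq (x + y) z
    have h2 := hq x z
    have h3 := hq y z
    simp only [map_add, LinearMap.add_apply] at h1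
    rw [QuadraticMap.polar, sub_smul, sub_smul, ← h1, ← h2, ← h3]
    abel
  have hinv : ∀ y, bull e (star e y) = y := by
    have h1 : star e * bull e = 1 := by
      ext y
      simp [hq, he]
    have h2 : bull e * star e = 1 := mul_eq_one_comm.mp h1
    intro y
    exact congrArg (fun f => f y) h2
  obtain ⟨R, hR⟩ : ∃ R : A →ₗ[K] A →ₗ[K] A, ∀ x y, R x y = star x (bull e y) :=
    ⟨(LinearMap.lcomp K A (bull e)).comp star, fun x y => rfl⟩
  have Re : ∀ y, R e y = y := by
    intro y
    rw [hR, hq, he, one_smul]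
  have R0 : ∀ x v, v ≠ 0 → R x v = 0 → x = 0 := by
    intro x v hv h
    by_contra h0
    rw [hR] at h
    exact hstar x _ h0 (hbull e v e0 hv) h
  have Rsq : ∀ x, QuadraticMap.polar q x e = 0 → ∀ y, R x (R x y) = -(q x • y) := by
    intro x hx y
    have h1 := hpol x e y
    rw [hx, zero_smul] at h1
    have h2 : R x y = - star e (bull x y) := by
      rw [hR]; exact eq_neg_of_add_eq_zero_left h1
    rw [h2, map_neg, hR, hinv, hq]
  have Ranti : ∀ x y, QuadraticMap.polar q x e = 0 → QuadraticMap.polar q y e = 0 →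
      QuadraticMap.polar q x y = 0 → ∀ z, R x (R y z) = - R y (R x z) := by
    intro x y hx hy hxy z
    have h1 := Rsq (x + y) (by rw [QuadraticMap.polar_add_left, hx, hy, add_zero]) z
    have h2 := Rsq x hx z
    have h3 := Rsq y hy z
    have h4 : q (x + y) = q x + q y := by
      rw [QuadraticMap.map_add q, hxy, add_zero]
    simp only [map_add, LinearMap.add_apply, h2, h3, h4, add_smul] at h1
    linear_combination (norm := module) h1
  obtain ⟨i, i0, hie⟩ : ∃ i, i ≠ 0 ∧ QuadraticMap.polar q i e = 0 := by
    have h := LinearMap.ker_ne_bot_of_finrank_lt (f := (QuadraticMap.polarBilin q).flip e)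
      (by simp [hdim])
    obtain ⟨x, hx, hx0⟩ := (Submodule.ne_bot_iff _).mp h
    exact ⟨x, hx0, by simpa using hx⟩
  obtain ⟨j, j0, hje, hji⟩ : ∃ j, j ≠ 0 ∧ QuadraticMap.polar q j e = 0 ∧
      QuadraticMap.polar q j i = 0 := by
    have h := LinearMap.ker_ne_bot_of_finrank_lt
      (f := ((QuadraticMap.polarBilin q).flip e).prod ((QuadraticMap.polarBilin q).flip i))
      (by simp [hdim])
    obtain ⟨x, hx, hx0⟩ := (Submodule.ne_bot_iff _).mp h
    have : QuadraticMap.polar q x e = 0 ∧ QuadraticMap.polar q x i = 0 := by simpa using hx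
    exact ⟨x, hx0, this⟩
  have p0 : q i ≠ 0 := fun h => i0 (anis i h)
  have r0 : q j ≠ 0 := fun h => j0 (anis j h)
  have hei := (QuadraticMap.polar_comm q e i).trans hie
  have hej := (QuadraticMap.polar_comm q e j).trans hje
  have hij := (QuadraticMap.polar_comm q i j).trans hji
  have ps : ∀ x, QuadraticMap.polar q x x = 2 * q x := by
    intro x
    simp [QuadraticMap.polar_self]
  have ind : ∀ a b c : K, a • e + b • i + c • j = 0 → a = 0 ∧ b = 0 ∧ c = 0 := by
    intro a b c h
    have h1 : ∀ t, QuadraticMap.polar q (a • e + b • i + c • j) t = 0 := by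
      intro t
      rw [h, QuadraticMap.polar_zero_left]
    simp only [QuadraticMap.polar_add_left, QuadraticMap.polar_smul_left, smul_eq_mul] at h1
    have he1 := h1 e
    have hi1 := h1 i
    have hj1 := h1 j
    simp only [hie, hje, hji, hei, hej, hij, ps, he] at he1 hi1 hj1
    refine ⟨?_, ?_, ?_⟩
    · simpa [hchar] using he1
    · simpa [hchar, p0] using hi1
    · simpa [hchar, r0] using hj1
  have ind2 : ∀ a b c : K, a • e + b • R i e + c • R j e = 0 → a = 0 ∧ b = 0 ∧ c = 0 := by
    intro a b c h
    apply ind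
    apply R0 _ e e0
    simpa [Re] using h
  have key : ∀ a b c : K, R i (R j e) ≠ a • e + b • R i e + c • R j e := by
    intro a b c h
    have h1 := congrArg (R i) h
    simp only [map_add, map_smul, Rsq i hie] at h1
    rw [h] at h1
    have h2 := (ind2 (c * a - b * q i) (a + b * c) (c * c + q i) (by
      linear_combination (norm := module) -h1)).2.2
    have h3 : q (i + c • e) = 0 := by
      rw [QuadraticMap.map_add q, QuadraticMap.map_smul, QuadraticMap.polar_smul_right, hie, he]
      simp only [smul_eq_mul]
      linear_combination h2
    have h4 := ind c 1 0 (by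
      rw [← anis _ h3]; module)
    exact one_ne_zero h4.2.1
  obtain ⟨x, hx⟩ : ∃ x, R x e = R i (R j e) := by
    have hinj : Function.Injective (R.flip e) := by
      rw [← LinearMap.ker_eq_bot, LinearMap.ker_eq_bot']
      intro m hm
      exact R0 m e e0 hm
    exact LinearMap.injective_iff_surjective.mp hinj (R i (R j e))
  obtain ⟨α, β, γ, w, hxw, hwe, hwi, hwj⟩ : ∃ (α β γ : K) (w : A),
      x = α • e + β • i + γ • j + w ∧ QuadraticMap.polar q w e = 0 ∧
      QuadraticMap.polar q w i = 0 ∧ QuadraticMap.polar q w j = 0 := by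
    refine ⟨QuadraticMap.polar q x e / 2, QuadraticMap.polar q x i / (2 * q i),
      QuadraticMap.polar q x j / (2 * q j), x - ((QuadraticMap.polar q x e / 2) • e +
       (QuadraticMap.polar q x i / (2 * q i)) • i + (QuadraticMap.polar q x j / (2 * q j)) • j),
       by abel, ?_, ?_, ?_⟩ <;>
    · simp only [QuadraticMap.polar_sub_left, QuadraticMap.polar_add_left,
        QuadraticMap.polar_smul_left, smul_eq_mul, hie, hje, hji, hei, hej, hij, ps, he]
      field_simp
      ring
  have hW : R w e = R i (R j e) - α • e - β • R i e - γ • R j e := by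
    rw [← hx, hxw]
    simp only [map_add, map_smul, LinearMap.add_apply, LinearMap.smul_apply, Re]
    abel
  have aij := Ranti j i hje hie hji
  have awi := Ranti w i hwe hie hwi
  have awj := Ranti w j hwe hje hwj
  have h1 : R w (R w e) = R i (R j (R w e)) - α • R w e + β • R i (R w e) + γ • R j (R w e) := by
    conv_lhs => rw [hW]
    simp only [map_sub, map_smul, awi, awj, map_neg]
    module
  rw [Rsq w hwe, hW] at h1
  simp only [map_sub, map_smul, map_neg, aij, Rsq i hie, Rsq j hje] at h1
  have hα : α = 0 := by
    by_contra hα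
    apply key (((- q i * q j + α^2 + β^2 * q i + γ^2 * q j + q w)) / (2 * α)) (γ * q j / α)
      (- β * q i / α)
    have h2 : (2 * α) ≠ 0 := mul_ne_zero hchar hα
    apply smul_right_injective A h2
    simp only [smul_add, smul_smul]
    have t1 : 2 * α * ((- q i * q j + α^2 + β^2 * q i + γ^2 * q j + q w) / (2 * α)) =
      (- q i * q j + α^2 + β^2 * q i + γ^2 * q j + q w) := by field_simp
    have t2 : 2 * α * (γ * q j / α) = 2 * γ * q j := by field_simp
    have t3 : 2 * α * (- β * q i / α) = - 2 * β * q i := by field_simp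
    rw [t1, t2, t3]
    linear_combination (norm := module) h1
  subst hα
  obtain ⟨hc, -, -⟩ := ind2 (- q i * q j + β^2 * q i + γ^2 * q j + q w) (2 * γ * q j)
    (-2 * β * q i) (by linear_combination (norm := module) -h1)
  obtain ⟨-, hγ, hβ⟩ := ind2 (- q i * q j + β^2 * q i + γ^2 * q j + q w) (2 * γ * q j)
    (-2 * β * q i) (by linear_combination (norm := module) -h1)
  have hγ : γ = 0 := by simpa [hchar, r0] using hγ
  have hβ : β = 0 := by simpa [hchar, p0] using hβ
  subst hγ hβ
  have hw : q w = q i * q j := by linear_combination hc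
  refine ⟨-q i, -q j, neg_ne_zero.mpr p0, neg_ne_zero.mpr r0, ?_⟩
  let f : (Fin 4 → K) →ₗ[K] A := Fintype.linearCombination K ![e, i, j, w]
  have hf : ∀ c, f c = c 0 • e + c 1 • i + c 2 • j + c 3 • w := by
    intro c
    simp [f, Fintype.linearCombination_apply, Fin.sum_univ_four]
  have hew := (QuadraticMap.polar_comm q e w).trans hwe
  have hiw := (QuadraticMap.polar_comm q i w).trans hwi
  have hjw := (QuadraticMap.polar_comm q j w).trans hwj
  have hqf : ∀ c, q (f c) = QuadraticMap.weightedSumSquares K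
      ![1, - -q i, - -q j, -q i * -q j] c := by
    intro c
    rw [hf]
    simp only [QuadraticMap.map_add q, QuadraticMap.map_smul, QuadraticMap.polar_add_left,
      QuadraticMap.polar_smul_left, QuadraticMap.polar_smul_right, hei, hej, hij, hew, hiw, hjw,
      he, hw, QuadraticMap.weightedSumSquares_apply, Fin.sum_univ_four, smul_eq_mul]
    simp
    ring
  have hinj : Function.Injective f := by
    rw [← LinearMap.ker_eq_bot, LinearMap.ker_eq_bot']
    intro c h
    have h1 : ∀ t, QuadraticMap.polar q (f c) t = 0 := by
      intro t
      rw [h, QuadraticMap.polar_zero_left]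
    simp only [hf, QuadraticMap.polar_add_left, QuadraticMap.polar_smul_left, smul_eq_mul] at h1
    have he1 := h1 e
    have hi1 := h1 i
    have hj1 := h1 j
    have hw1 := h1 w
    simp only [hie, hje, hji, hei, hej, hij, hwe, hwi, hwj, hew, hiw, hjw, ps, he, hw]
      at he1 hi1 hj1 hw1
    ext n
    fin_cases n
    · simpa [hchar] using he1
    · simpa [hchar, p0] using hi1
    · simpa [hchar, r0] using hj1
    · simpa [hchar, p0, r0] using hw1
  let g := LinearEquiv.ofInjectiveOfFinrankEq f hinj (by simp [hdim])
  refine QuadraticMap.Equivalent.symm ⟨⟨g, ?_⟩⟩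
  intro c
  exact hqf c
end
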